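/- Let P be a probability measure on Z satisfying Bernstein's condition with constant c > 0, let π be a prior probability measure on Θ, set α = 1/(c + C), and let d > 0, κ ≥ 1 with d ≤ αn. Assume the prior mass condition π({θ ∈ Θ : R_P(θ) − R_P* ≤ s}) ≥ s^d/κ for all s ∈ (0,1]. Then E_S E_{θ∼ρ_S(π,α)}[R_P(θ)] ≤ R_P* + 2( d(1 + log(αn/d)) + log κ )/(αn), where E_S denotes expectation over the i.i.d. n-sample S from P. -/

import Mathlib

open MeasureTheory ProbabilityTheory
open scoped Classical

noncomputable section

/-- Kullback–Leibler divergence of `ρ` with respect to `π`. -/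
def klDiv {Ω : Type*} [MeasurableSpace Ω] (ρ π : Measure Ω) : ENNReal :=
  if ρ ≪ π ∧ Integrable (llr ρ π) ρ then ENNReal.ofReal (∫ x, llr ρ π x ∂ρ) else ⊤

/-- The prediction risk `R_P(θ) = E_{Z∼P}[ℓ(Z,θ)]`. -/
def risk {Z Θ : Type*} [MeasurableSpace Z] (ℓ : Z → Θ → ℝ) (P : Measure Z) (θ : Θ) : ℝ :=
  ∫ z, ℓ z θ ∂P

/-- The optimal risk `R_P* = inf_θ R_P(θ)`. -/
def optRisk {Z Θ : Type*} [MeasurableSpace Z] (ℓ : Z → Θ → ℝ) (P : Measure Z) : ℝ :=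
  ⨅ θ, risk ℓ P θ

/-- The empirical risk `R̂_S(θ) = (1/n) ∑ᵢ ℓ(Zᵢ,θ)`. -/
def empRisk {Z Θ : Type*} {n : ℕ} (ℓ : Z → Θ → ℝ) (S : Fin n → Z) (θ : Θ) : ℝ :=
  (∑ i, ℓ (S i) θ) / n

/-- The PAC-Bayes risk estimate `R̂_S(ρ,π,α) = E_{θ∼ρ}[R̂_S(θ)] + KL(ρ∥π)/(αn)`. -/
def riskEstimate {Z Θ : Type*} [MeasurableSpace Θ] {n : ℕ} (ℓ : Z → Θ → ℝ) (S : Fin n → Z)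
    (ρ π : Measure Θ) (α : ℝ) : ℝ :=
  (∫ θ, empRisk ℓ S θ ∂ρ) + (klDiv ρ π).toReal / (α * n)


/-- The Gibbs posterior `ρ_S(π,α)`, with density proportional to
`exp(−αn R̂_S)` with respect to the prior `π`. -/
def gibbs {Z Θ : Type*} [MeasurableSpace Θ] {n : ℕ} (ℓ : Z → Θ → ℝ) (π : Measure Θ)
    (α : ℝ) (S : Fin n → Z) : Measure Θ :=
  π.withDensity fun θ => ENNReal.ofReal
    (Real.exp (-(α * n) * empRisk ℓ S θ) / ∫ ϑ, Real.exp (-(α * n) * empRisk ℓ S ϑ) ∂π)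

/-- A quadratic upper bound on the exponential function near zero. -/
lemma exp_le_quadratic {y u : ℝ} (hy : |y| ≤ u) (hu : u ≤ 1) :
    Real.exp y ≤ 1 + y + y ^ 2 / 2 * (1 + 4 / 9 * u) := by
  have h := (abs_le.1 (Real.exp_bound (x := y) (hy.trans hu) (n := 3) (by norm_num))).2
  norm_num [Finset.sum_range_succ, Nat.factorial] at h
  have h3 : |y| ^ 3 ≤ y ^ 2 * u := by
    calc |y| ^ 3 = y ^ 2 * |y| := by rw [← sq_abs y]; ring
      _ ≤ y ^ 2 * u := by gcongr
  linarith

/-- Under a Bernstein-type condition, the moment generating function of a bounded random variable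
at `-1 / (c + C)` is controlled by half of its mean. -/
lemma integral_exp_neg_mul_le {Z : Type*} [MeasurableSpace Z] {P : Measure Z}
    [IsProbabilityMeasure P] {X : Z → ℝ} (hX : Measurable X) {c C : ℝ} (hc : 0 < c) (hC : 0 < C)
    (hbound : ∀ z, |X z| ≤ C) (hBern : ∫ z, X z ^ 2 ∂P ≤ c * ∫ z, X z ∂P)
    {α : ℝ} (hα : α = 1 / (c + C)) :
    ∫ z, Real.exp (-α * X z) ∂P ≤ Real.exp (-α / 2 * ∫ z, X z ∂P) := by
  have hcC : 0 < c + C := by positivity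
  have hα0 : 0 < α := by rw [hα]; positivity
  have hαC : α * c = 1 - α * C := by rw [hα]; field_simp; ring
  have hu : α * C ≤ 1 := by nlinarith [mul_pos hα0 hc]
  have hXint : Integrable X P :=
    .of_bound hX.aestronglyMeasurable C (ae_of_all _ hbound)
  have hX2int : Integrable (fun z => X z ^ 2) P := by
    refine .of_bound (by fun_prop) (C ^ 2) (ae_of_all _ fun z => ?_)
    rw [norm_pow]
    exact pow_le_pow_left₀ (norm_nonneg _) (hbound z) 2
  have hquad : ∀ z, Real.exp (-α * X z) ≤
      1 + -α * X z + α ^ 2 / 2 * (1 + 4 / 9 * (α * C)) * X z ^ 2 := by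
    intro z
    have hz : |-α * X z| ≤ α * C := by
      rw [abs_mul, abs_neg, abs_of_pos hα0]
      exact mul_le_mul_of_nonneg_left (hbound z) hα0.le
    refine (exp_le_quadratic hz hu).trans_eq (by ring)
  have hlin : Integrable (fun z => 1 + -α * X z) P :=
    (integrable_const _).add (hXint.const_mul _)
  have hsq : Integrable (fun z => α ^ 2 / 2 * (1 + 4 / 9 * (α * C)) * X z ^ 2) P :=
    hX2int.const_mul _
  have hmean : 0 ≤ ∫ z, X z ∂P :=
    nonneg_of_mul_nonneg_right ((integral_nonneg fun z => sq_nonneg _).trans hBern) hc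
  calc ∫ z, Real.exp (-α * X z) ∂P
      ≤ ∫ z, (1 + -α * X z + α ^ 2 / 2 * (1 + 4 / 9 * (α * C)) * X z ^ 2) ∂P :=
        integral_mono_of_nonneg (ae_of_all _ fun z => (Real.exp_pos _).le) (hlin.add hsq)
          (ae_of_all _ hquad)
    _ = 1 + -α * ∫ z, X z ∂P + α ^ 2 / 2 * (1 + 4 / 9 * (α * C)) * ∫ z, X z ^ 2 ∂P := by
        rw [integral_add hlin hsq, integral_add (integrable_const _) (hXint.const_mul _),
          integral_const_mul, integral_const_mul]
        simp
    _ ≤ 1 + -α * ∫ z, X z ∂P +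
          α ^ 2 / 2 * (1 + 4 / 9 * (α * C)) * (c * ∫ z, X z ∂P) := by gcongr
    _ = 1 + -α * ∫ z, X z ∂P +
          α / 2 * ((1 + 4 / 9 * (α * C)) * (α * c)) * ∫ z, X z ∂P := by ring
    _ ≤ 1 + -α * ∫ z, X z ∂P + α / 2 * 1 * ∫ z, X z ∂P := by
        gcongr
        rw [hαC]
        nlinarith [mul_pos hα0 hC]
    _ = -α / 2 * ∫ z, X z ∂P + 1 := by ring
    _ ≤ _ := Real.add_one_le_exp _

/-- A change-of-measure bound for expectations under an exponentially tilted measure, in terms of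
the conditional distribution given an arbitrary event. -/
lemma integral_tilted_le {Θ : Type*} [MeasurableSpace Θ] {π : Measure Θ} [IsProbabilityMeasure π]
    {f g : Θ → ℝ} (hf : Measurable f) (hg : Measurable g) {B D : ℝ}
    (hfB : ∀ θ, |f θ| ≤ B) (hgD : ∀ θ, |g θ| ≤ D) {A : Set Θ}
    (hπA : π A ≠ 0) :
    ∫ θ, g θ ∂(π.tilted f) ≤
      (∫ θ, Real.exp (f θ + g θ) ∂π) - 1 - (∫ θ, f θ ∂(π[|A])) - Real.log (π A).toReal := by
  have hexp_int : ∀ {h : Θ → ℝ} {E : ℝ} (μ : Measure Θ) [IsProbabilityMeasure μ],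
      Measurable h → (∀ θ, |h θ| ≤ E) → Integrable (fun θ => Real.exp (h θ)) μ := by
    intro h E μ _ hh hE
    refine .of_bound (by fun_prop) (Real.exp E) (ae_of_all _ fun θ => ?_)
    rw [Real.norm_eq_abs, Real.abs_exp]
    exact Real.exp_le_exp.2 ((le_abs_self _).trans (hE θ))
  have hjensen : ∀ {h : Θ → ℝ} {E : ℝ} (μ : Measure Θ) [IsProbabilityMeasure μ],
      Measurable h → (∀ θ, |h θ| ≤ E) →
      Real.exp (∫ θ, h θ ∂μ) ≤ ∫ θ, Real.exp (h θ) ∂μ := by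
    intro h E μ _ hh hE
    exact convexOn_exp.map_integral_le Real.continuous_exp.continuousOn isClosed_univ
      (ae_of_all _ fun _ => Set.mem_univ _)
      (.of_bound hh.aestronglyMeasurable E (ae_of_all _ hE)) (hexp_int μ hh hE)
  have hfint := hexp_int π hf hfB
  have hfgint : Integrable (fun θ => Real.exp (f θ + g θ)) π :=
    hexp_int π (hf.add hg) fun θ => (abs_add_le _ _).trans (add_le_add (hfB θ) (hgD θ))
  have : IsProbabilityMeasure (π.tilted f) := isProbabilityMeasure_tilted hfint
  have : IsProbabilityMeasure (π[|A]) := cond_isProbabilityMeasure hπA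
  have hpos : 0 < (π A).toReal := ENNReal.toReal_pos hπA (measure_ne_top _ _)
  have hZ : 0 < ∫ θ, Real.exp (f θ) ∂π := integral_exp_pos hfint
  have hW : 0 < ∫ θ, Real.exp (f θ + g θ) ∂π := integral_exp_pos hfgint
  have hcond : (π A).toReal * ∫ θ, Real.exp (f θ) ∂(π[|A]) ≤ ∫ θ, Real.exp (f θ) ∂π := by
    rw [ProbabilityTheory.cond, integral_smul_measure, ENNReal.toReal_inv, smul_eq_mul,
      mul_inv_cancel_left₀ hpos.ne']
    exact setIntegral_le_integral hfint (ae_of_all _ fun θ => (Real.exp_pos _).le)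
  have hlower : Real.log (π A).toReal + ∫ θ, f θ ∂(π[|A]) ≤
      Real.log (∫ θ, Real.exp (f θ) ∂π) := by
    rw [Real.le_log_iff_exp_le hZ, Real.exp_add, Real.exp_log hpos]
    exact (mul_le_mul_of_nonneg_left (hjensen _ hf hfB) hpos.le).trans hcond
  have hupper : ∫ θ, g θ ∂(π.tilted f) ≤
      Real.log (∫ θ, Real.exp (f θ + g θ) ∂π) - Real.log (∫ θ, Real.exp (f θ) ∂π) := by
    rw [← Real.log_div hW.ne' hZ.ne', Real.le_log_iff_exp_le (div_pos hW hZ)]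
    exact (hjensen (π.tilted f) hg hgD).trans_eq (integral_exp_tilted f g)
  linarith [Real.log_le_sub_one_of_pos hW]

lemma gibbs_eq_tilted {Z Θ : Type*} [MeasurableSpace Θ] {n : ℕ} (ℓ : Z → Θ → ℝ) (π : Measure Θ)
    (α : ℝ) (S : Fin n → Z) :
    gibbs ℓ π α S = π.tilted fun θ => -(α * n) * empRisk ℓ S θ := rfl

lemma measurable_uncurry_empRisk {Z Θ : Type*} [MeasurableSpace Z] [MeasurableSpace Θ]
    {ℓ : Z → Θ → ℝ} (hℓ : Measurable (Function.uncurry ℓ)) (n : ℕ) :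
    Measurable fun p : (Fin n → Z) × Θ => empRisk ℓ p.1 p.2 :=
  (Finset.measurable_fun_sum _ fun i _ =>
    hℓ.comp (((measurable_pi_apply i).comp measurable_fst).prodMk measurable_snd)).div_const _

lemma empRisk_mem_Icc {Z Θ : Type*} {ℓ : Z → Θ → ℝ} {C : ℝ} (hℓ : ∀ z θ, ℓ z θ ∈ Set.Icc 0 C)
    {n : ℕ} (hn : 0 < n) (S : Fin n → Z) (θ : Θ) : empRisk ℓ S θ ∈ Set.Icc 0 C := by
  have hn' : (0 : ℝ) < n := by exact_mod_cast hn
  refine ⟨div_nonneg (Finset.sum_nonneg fun i _ => (hℓ _ _).1) hn'.le, ?_⟩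
  rw [empRisk, div_le_iff₀ hn']
  calc ∑ i, ℓ (S i) θ ≤ ∑ _i : Fin n, C := Finset.sum_le_sum fun i _ => (hℓ _ _).2
    _ = C * n := by simp [mul_comm]

lemma integrable_loss {Z Θ : Type*} [MeasurableSpace Z] [MeasurableSpace Θ] {ℓ : Z → Θ → ℝ}
    (hℓmeas : Measurable (Function.uncurry ℓ)) {C : ℝ} (hℓ : ∀ z θ, ℓ z θ ∈ Set.Icc 0 C)
    (P : Measure Z) [IsProbabilityMeasure P] (θ : Θ) : Integrable (fun z => ℓ z θ) P :=
  .of_bound (hℓmeas.comp (measurable_id.prodMk measurable_const)).aestronglyMeasurable C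
    (ae_of_all _ fun z => by rw [Real.norm_of_nonneg (hℓ z θ).1]; exact (hℓ z θ).2)

lemma integral_empRisk {Z Θ : Type*} [MeasurableSpace Z] [MeasurableSpace Θ] {ℓ : Z → Θ → ℝ}
    (hℓmeas : Measurable (Function.uncurry ℓ)) {C : ℝ} (hℓ : ∀ z θ, ℓ z θ ∈ Set.Icc 0 C)
    (P : Measure Z) [IsProbabilityMeasure P] {n : ℕ} (hn : 0 < n) (θ : Θ) :
    ∫ S, empRisk ℓ S θ ∂(Measure.pi fun _ : Fin n => P) = risk ℓ P θ := by
  have hint := integrable_loss hℓmeas hℓ P θ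
  have hmean (i : Fin n) : ∫ S, ℓ (S i) θ ∂(Measure.pi fun _ : Fin n => P) = risk ℓ P θ :=
    integral_comp_eval (μ := fun _ : Fin n => P) hint.aestronglyMeasurable
  have hn' : (n : ℝ) ≠ 0 := by exact_mod_cast hn.ne'
  unfold empRisk
  rw [integral_div, integral_finsetSum _ fun i _ =>
    (show Integrable (fun S : Fin n → Z => ℓ (S i) θ) (Measure.pi fun _ => P) from
      (measurePreserving_eval (fun _ : Fin n => P) i).integrable_comp_of_integrable hint)]
  simp_rw [hmean]
  simp [hn']

/-- The exponential moment inequality underlying the fast rate, at a fixed parameter. -/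
lemma integral_exp_excess_le_one {Z Θ : Type*} [MeasurableSpace Z] [MeasurableSpace Θ]
    {ℓ : Z → Θ → ℝ} (hℓmeas : Measurable (Function.uncurry ℓ)) {C : ℝ} (hC : 0 < C)
    (hℓ : ∀ z θ, ℓ z θ ∈ Set.Icc 0 C) (P : Measure Z) [IsProbabilityMeasure P] (θ θstar : Θ)
    {c : ℝ} (hc : 0 < c)
    (hBern : ∫ z, (ℓ z θ - ℓ z θstar) ^ 2 ∂P ≤ c * (risk ℓ P θ - risk ℓ P θstar))
    {n : ℕ} (hn : 0 < n) {α : ℝ} (hα : α = 1 / (c + C)) :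
    ∫ S, Real.exp (-(α * n) * empRisk ℓ S θ + (α * n / 2 * (risk ℓ P θ - risk ℓ P θstar) +
      α * n * empRisk ℓ S θstar)) ∂(Measure.pi fun _ : Fin n => P) ≤ 1 := by
  have hn' : (n : ℝ) ≠ 0 := by exact_mod_cast hn.ne'
  have hmeas (θ : Θ) : Measurable fun z => ℓ z θ :=
    hℓmeas.comp (measurable_id.prodMk measurable_const)
  have hrisk : ∫ z, (ℓ z θ - ℓ z θstar) ∂P = risk ℓ P θ - risk ℓ P θstar :=
    integral_sub (integrable_loss hℓmeas hℓ P θ) (integrable_loss hℓmeas hℓ P θstar)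
  have hmgf := integral_exp_neg_mul_le (P := P) ((hmeas θ).sub (hmeas θstar)) hc hC
    (fun z => abs_sub_le_iff.2
      ⟨by linarith [(hℓ z θ).2, (hℓ z θstar).1], by linarith [(hℓ z θ).1, (hℓ z θstar).2]⟩)
    (by simpa only [Pi.sub_apply, hrisk] using hBern) hα
  simp only [Pi.sub_apply, hrisk] at hmgf
  have hfactor (S : Fin n → Z) :
      Real.exp (-(α * n) * empRisk ℓ S θ + (α * n / 2 * (risk ℓ P θ - risk ℓ P θstar) +
        α * n * empRisk ℓ S θstar)) =
      Real.exp (n * (α / 2 * (risk ℓ P θ - risk ℓ P θstar))) *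
        ∏ i, Real.exp (-α * (ℓ (S i) θ - ℓ (S i) θstar)) := by
    rw [← Real.exp_sum, ← Real.exp_add, ← Finset.mul_sum, Finset.sum_sub_distrib]
    congr 1
    unfold empRisk
    field_simp
    ring
  simp_rw [hfactor]
  rw [integral_const_mul,
    integral_fintype_prod_eq_pow (fun z => Real.exp (-α * (ℓ z θ - ℓ z θstar))), Fintype.card_fin]
  calc _ ≤ Real.exp (n * (α / 2 * (risk ℓ P θ - risk ℓ P θstar))) *
        Real.exp (-α / 2 * (risk ℓ P θ - risk ℓ P θstar)) ^ n := by
        gcongr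
    _ = 1 := by
        rw [← Real.exp_nat_mul, ← Real.exp_add, Real.exp_eq_one_iff]
        ring

/-- Corollary 2 of the paper, second statement: under Bernstein's condition and the
prior mass condition, the Gibbs posterior with `α = 1/(c+C)` achieves the fast rate
`2(d(1 + log(αn/d)) + log κ)/(αn)`. -/
theorem gibbs_fast_rate_of_prior_mass
    {Z Θ : Type*} [MeasurableSpace Z] [MeasurableSpace Θ]
    (ℓ : Z → Θ → ℝ) (hℓmeas : Measurable (Function.uncurry ℓ))
    (C : ℝ) (hC : 0 < C) (hℓ : ∀ z θ, ℓ z θ ∈ Set.Icc 0 C)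
    (P : Measure Z) [IsProbabilityMeasure P]
    (θstar : Θ) (hθstar : ∀ θ, risk ℓ P θstar ≤ risk ℓ P θ)
    (c : ℝ) (hc : 0 < c)
    (hBern : ∀ θ, ∫ z, (ℓ z θ - ℓ z θstar) ^ 2 ∂P ≤ c * (risk ℓ P θ - optRisk ℓ P))
    (π : Measure Θ) [IsProbabilityMeasure π]
    (n : ℕ) (hn : 0 < n) (α : ℝ) (hα : α = 1 / (c + C))
    (d κ : ℝ) (hd : 0 < d) (hκ : 1 ≤ κ) (hdn : d ≤ α * n)
    (hmass : ∀ s ∈ Set.Ioc (0 : ℝ) 1,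
      s ^ d / κ ≤ (π {θ | risk ℓ P θ - optRisk ℓ P ≤ s}).toReal) :
    (∫ S, ∫ θ, risk ℓ P θ ∂(gibbs ℓ π α S) ∂(Measure.pi fun _ : Fin n => P)) ≤
      optRisk ℓ P + 2 * (d * (1 + Real.log (α * n / d)) + Real.log κ) / (α * n) := by
  have hn' : (0 : ℝ) < n := by exact_mod_cast hn
  have hα0 : 0 < α := by rw [hα]; positivity
  have hαn : 0 < α * n := by positivity
  have : Nonempty Θ := ⟨θstar⟩
  have hopt : optRisk ℓ P = risk ℓ P θstar :=
    le_antisymm (ciInf_le ⟨_, Set.forall_mem_range.2 hθstar⟩ θstar) (le_ciInf hθstar)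
  rw [hopt] at hBern hmass ⊢
  have hriskmeas : Measurable (risk ℓ P) :=
    hℓmeas.stronglyMeasurable.integral_prod_left.measurable
  have hrisk0 (θ : Θ) : 0 ≤ risk ℓ P θ := integral_nonneg fun z => (hℓ z θ).1
  have hriskC (θ : Θ) : risk ℓ P θ ≤ C :=
    (integral_mono (integrable_loss hℓmeas hℓ P θ) (integrable_const C)
      fun z => (hℓ z θ).2).trans_eq (by simp)
  set Q := Measure.pi fun _ : Fin n => P with hQ
  set s := d / (α * n) with hs
  have hs0 : 0 < s := by positivity
  have hs1 : s ≤ 1 := (div_le_one hαn).2 hdn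
  set A := {θ | risk ℓ P θ - risk ℓ P θstar ≤ s}
  have hA : MeasurableSet A := measurableSet_le (hriskmeas.sub_const _) measurable_const
  have hAmass : s ^ d / κ ≤ (π A).toReal := hmass s ⟨hs0, hs1⟩
  have hsd : 0 < s ^ d := Real.rpow_pos_of_pos hs0 d
  have hκ0 : 0 < κ := by linarith
  have hπA : π A ≠ 0 := fun h => by
    rw [h, ENNReal.toReal_zero] at hAmass
    exact absurd hAmass (not_le.2 (by positivity))
  have : IsProbabilityMeasure (π[|A]) := cond_isProbabilityMeasure hπA
  have hlogA : -Real.log (π A).toReal ≤ d * Real.log (α * n / d) + Real.log κ := by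
    have h := Real.log_le_log (by positivity) hAmass
    rw [Real.log_div hsd.ne' hκ0.ne', Real.log_rpow hs0, hs, ← inv_div, Real.log_inv] at h
    linarith
  have hempmeas := measurable_uncurry_empRisk hℓmeas n
  have hempS (S : Fin n → Z) : Measurable (empRisk ℓ S) :=
    hempmeas.comp (measurable_const.prodMk measurable_id)
  have hempθ (θ : Θ) : Measurable fun S : Fin n → Z => empRisk ℓ S θ :=
    hempmeas.comp (measurable_id.prodMk measurable_const)
  have hempbd (S : Fin n → Z) (θ : Θ) := empRisk_mem_Icc hℓ hn S θ
  set W : (Fin n → Z) → Θ → ℝ := fun S θ => Real.exp (-(α * n) * empRisk ℓ S θ +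
    (α * n / 2 * (risk ℓ P θ - risk ℓ P θstar) + α * n * empRisk ℓ S θstar)) with hW
  have hWint : Integrable (Function.uncurry W) (Q.prod π) := by
    have hm : Measurable (Function.uncurry W) :=
      Real.measurable_exp.comp ((hempmeas.const_mul _).add
        ((((hriskmeas.comp measurable_snd).sub_const _).const_mul _).add
          (((hempθ θstar).comp measurable_fst).const_mul _)))
    refine .of_bound hm.aestronglyMeasurable
      (Real.exp (α * n / 2 * C + α * n * C)) (ae_of_all _ fun p => ?_)
    rw [Function.uncurry, hW, Real.norm_eq_abs, Real.abs_exp, Real.exp_le_exp]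
    have h1 : 0 ≤ α * n * empRisk ℓ p.1 p.2 := mul_nonneg hαn.le (hempbd _ _).1
    have h2 : α * n * empRisk ℓ p.1 θstar ≤ α * n * C :=
      mul_le_mul_of_nonneg_left (hempbd _ _).2 hαn.le
    have h3 : α * n / 2 * (risk ℓ P p.2 - risk ℓ P θstar) ≤ α * n / 2 * C :=
      mul_le_mul_of_nonneg_left (by linarith [hriskC p.2, hrisk0 θstar]) (by positivity)
    linarith
  have hEint : Integrable (Function.uncurry fun (S : Fin n → Z) θ => empRisk ℓ S θ)
      (Q.prod (π[|A])) :=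
    .of_bound hempmeas.aestronglyMeasurable C (ae_of_all _ fun p => by
      rw [Function.uncurry, Real.norm_of_nonneg (hempbd _ _).1]; exact (hempbd _ _).2)
  have hEstar : Integrable (fun S : Fin n → Z => empRisk ℓ S θstar) Q :=
    .of_bound (hempθ θstar).aestronglyMeasurable C (ae_of_all _ fun S => by
      rw [Real.norm_of_nonneg (hempbd _ _).1]; exact (hempbd _ _).2)
  have hWone : ∫ S, ∫ θ, W S θ ∂π ∂Q ≤ 1 := by
    rw [integral_integral_swap hWint]
    exact (integral_mono hWint.integral_prod_right (integrable_const 1) fun θ =>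
      integral_exp_excess_le_one hℓmeas hC hℓ P θ θstar hc (hBern θ) hn hα).trans_eq (by simp)
  have hEcond : ∫ S, ∫ θ, empRisk ℓ S θ ∂(π[|A]) ∂Q ≤ risk ℓ P θstar + s := by
    rw [integral_integral_swap hEint]
    simp_rw [hQ, integral_empRisk hℓmeas hℓ P hn]
    have hle : ∀ᵐ θ ∂(π[|A]), risk ℓ P θ ≤ risk ℓ P θstar + s := by
      filter_upwards [ae_cond_mem hA] with θ hθ
      have : risk ℓ P θ - risk ℓ P θstar ≤ s := hθ
      linarith
    exact (integral_mono_of_nonneg (ae_of_all _ hrisk0) (integrable_const _) hle).trans_eq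
      (by simp)
  have hWint' : Integrable (fun S => ∫ θ, W S θ ∂π) Q := hWint.integral_prod_left
  have hEint' : Integrable (fun S => ∫ θ, empRisk ℓ S θ ∂(π[|A])) Q := hEint.integral_prod_left
  have hpoint (S : Fin n → Z) : ∫ θ, risk ℓ P θ ∂(gibbs ℓ π α S) ≤
      risk ℓ P θstar + 2 / (α * n) * ((∫ θ, W S θ ∂π) - 1 +
        α * n * (∫ θ, empRisk ℓ S θ ∂(π[|A])) - Real.log (π A).toReal -
          α * n * empRisk ℓ S θstar) := by
    rw [gibbs_eq_tilted]
    set f : Θ → ℝ := fun θ => -(α * n) * empRisk ℓ S θ with hf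
    have hfmeas : Measurable f := (hempS S).const_mul _
    have hfB (θ : Θ) : |f θ| ≤ α * n * C := by
      rw [hf, abs_mul, abs_neg, abs_of_pos hαn, abs_of_nonneg (hempbd S θ).1]
      exact mul_le_mul_of_nonneg_left (hempbd S θ).2 hαn.le
    have hfint : Integrable (fun θ => Real.exp (f θ)) π := by
      refine .of_bound (by fun_prop) (Real.exp (α * n * C)) (ae_of_all _ fun θ => ?_)
      rw [Real.norm_eq_abs, Real.abs_exp]
      exact Real.exp_le_exp.2 ((le_abs_self _).trans (hfB θ))
    have : IsProbabilityMeasure (π.tilted f) := isProbabilityMeasure_tilted hfint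
    have hriskint : Integrable (risk ℓ P) (π.tilted f) :=
      .of_bound hriskmeas.aestronglyMeasurable C (ae_of_all _ fun θ => by
        rw [Real.norm_of_nonneg (hrisk0 θ)]; exact hriskC θ)
    have h := integral_tilted_le (D := α * n / 2 * C + α * n * C)
      (g := fun θ => α * n / 2 * (risk ℓ P θ - risk ℓ P θstar) + α * n * empRisk ℓ S θstar)
      hfmeas (((hriskmeas.sub_const _).const_mul _).add_const _) hfB
      (fun θ => (abs_add_le _ _).trans (add_le_add
        (by
          rw [abs_mul, abs_of_pos (by positivity : 0 < α * n / 2)]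
          refine mul_le_mul_of_nonneg_left (abs_sub_le_iff.2 ⟨?_, ?_⟩) (by positivity)
          · linarith [hriskC θ, hrisk0 θstar]
          · linarith [hriskC θstar, hrisk0 θ])
        (by
          rw [abs_mul, abs_of_pos hαn, abs_of_nonneg (hempbd S θstar).1]
          exact mul_le_mul_of_nonneg_left (hempbd S θstar).2 hαn.le))) hπA
    have hexcess : Integrable (fun θ => risk ℓ P θ - risk ℓ P θstar) (π.tilted f) :=
      hriskint.sub (integrable_const _)
    rw [integral_add (hexcess.const_mul _) (integrable_const _),
      integral_const_mul, integral_sub hriskint (integrable_const _), hf,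
      integral_const_mul (-(α * n))] at h
    simp only [integral_const, probReal_univ, one_smul] at h
    rw [← sub_le_iff_le_add', div_mul_eq_mul_div, le_div_iff₀ hαn]
    linarith
  have hWsub : Integrable (fun S => (∫ θ, W S θ ∂π) - 1) Q := hWint'.sub (integrable_const _)
  have hsum : Integrable (fun S => (∫ θ, W S θ ∂π) - 1 +
      α * n * (∫ θ, empRisk ℓ S θ ∂(π[|A]))) Q := hWsub.add (hEint'.const_mul _)
  have hgint : Integrable (fun S => (∫ θ, W S θ ∂π) - 1 +
      α * n * (∫ θ, empRisk ℓ S θ ∂(π[|A])) - Real.log (π A).toReal) Q :=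
    hsum.sub (integrable_const _)
  have hgint' : Integrable (fun S => (∫ θ, W S θ ∂π) - 1 +
      α * n * (∫ θ, empRisk ℓ S θ ∂(π[|A])) - Real.log (π A).toReal -
        α * n * empRisk ℓ S θstar) Q := hgint.sub (hEstar.const_mul _)
  calc ∫ S, ∫ θ, risk ℓ P θ ∂(gibbs ℓ π α S) ∂Q
      ≤ ∫ S, (risk ℓ P θstar + 2 / (α * n) * ((∫ θ, W S θ ∂π) - 1 +
          α * n * (∫ θ, empRisk ℓ S θ ∂(π[|A])) - Real.log (π A).toReal -
            α * n * empRisk ℓ S θstar)) ∂Q :=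
        integral_mono_of_nonneg (ae_of_all _ fun S => integral_nonneg hrisk0)
          ((integrable_const _).add (hgint'.const_mul _))
          (ae_of_all _ hpoint)
    _ = risk ℓ P θstar + 2 / (α * n) * ((∫ S, ∫ θ, W S θ ∂π ∂Q) - 1 +
          α * n * (∫ S, ∫ θ, empRisk ℓ S θ ∂(π[|A]) ∂Q) - Real.log (π A).toReal -
            α * n * risk ℓ P θstar) := by
        rw [integral_add (integrable_const _) (hgint'.const_mul _),
          integral_const_mul, integral_sub hgint (hEstar.const_mul _),
          integral_sub hsum (integrable_const _), integral_add hWsub (hEint'.const_mul _),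
          integral_sub hWint' (integrable_const _), integral_const_mul, integral_const_mul,
          hQ, integral_empRisk hℓmeas hℓ P hn]
        simp
    _ ≤ risk ℓ P θstar + 2 / (α * n) * (1 - 1 + α * n * (risk ℓ P θstar + s) +
          (d * Real.log (α * n / d) + Real.log κ) - α * n * risk ℓ P θstar) := by
        rw [sub_eq_add_neg _ (Real.log _)]
        gcongr
    _ = _ := by
        rw [hs]
        field_simp
        ring

end
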